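/- arXiv:2006.09921 — 3 statements merged into one kernel-verified Lean document; each statement's English description precedes it below -/
import Mathlib

section
/- Let M : ℝⁿ → Matrix (Fin n) (Fin n) ℝ be continuously differentiable with M(q) symmetric for every q ∈ ℝⁿ, and let q : ℝ → ℝⁿ be differentiable. Define, for each t ∈ ℝ, the matrix C(t) with entries C(t)ᵢⱼ = (1/2) Σₖ ( ∂M_{ij}/∂q_k + ∂M_{ik}/∂q_j − ∂M_{jk}/∂q_i )(q(t)) · q̇(t)ₖ, where ∂M_{ij}/∂q_k denotes the k-th partial derivative of the (i,j) entry of M. Then for every t, the matrix (d/dt)[M(q(t))] − 2·C(t) is skew-symmetric. -/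
open Matrix

/-- The Christoffel-symbol choice of the Coriolis matrix:
`C(q, q̇)ᵢⱼ = (1/2) Σₖ (∂M_{ij}/∂q_k + ∂M_{ik}/∂q_j − ∂M_{jk}/∂q_i)(q) · q̇ₖ`. -/
noncomputable def coriolisMatrix (n : ℕ)
    (M : (Fin n → ℝ) → Matrix (Fin n) (Fin n) ℝ) (q qd : Fin n → ℝ) :
    Matrix (Fin n) (Fin n) ℝ :=
  Matrix.of fun i j =>
    (1 / 2) * ∑ k : Fin n,
      (fderiv ℝ (fun p => M p i j) q (Pi.single k 1)
        + fderiv ℝ (fun p => M p i k) q (Pi.single j 1)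
        - fderiv ℝ (fun p => M p j k) q (Pi.single i 1)) * qd k

/-!
Let `J` be the Jacobian of `p ↦ M p *ᵥ v` with the velocity `v` held fixed. In the Christoffel
formula the first summand contributes the directional derivative `Ṁ` of `M` along `v`, and the
other two contribute `J` and `-Jᵀ`. Hence `2 C = Ṁ + (J - Jᵀ)`, and `Ṁ - 2 C = Jᵀ - J` is
skew-symmetric.
-/

theorem map_eq_sum_smul_map_single {R ι E F : Type*} [Semiring R] [Fintype ι] [DecidableEq ι]
    [AddCommMonoid E] [Module R E] [FunLike F (ι → R) E] [LinearMapClass F R (ι → R) E]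
    (f : F) (v : ι → R) : f v = ∑ k, v k • f (Pi.single k 1) := by
  conv_lhs => rw [pi_eq_sum_univ' v, map_sum]
  simp only [map_smul]

/-- The matrix of partial derivatives `∂(M v)ᵢ/∂qⱼ` at `q`, with the velocity `v` held fixed: the
Jacobian of `p ↦ M p *ᵥ v` when `M` is differentiable at `q`. It is given by the sums
`∑ₖ (∂Mᵢₖ/∂qⱼ) vₖ`, so that it shares its terms with `coriolisMatrix`. -/
noncomputable def mulVecJacobian {n : ℕ} (M : (Fin n → ℝ) → Matrix (Fin n) (Fin n) ℝ)
    (q v : Fin n → ℝ) : Matrix (Fin n) (Fin n) ℝ :=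
  Matrix.of fun i j => ∑ k, fderiv ℝ (fun p => M p i k) q (Pi.single j 1) * v k

theorem two_smul_coriolisMatrix {n : ℕ} (M : (Fin n → ℝ) → Matrix (Fin n) (Fin n) ℝ)
    (q v : Fin n → ℝ) :
    (2 : ℝ) • coriolisMatrix n M q v
      = (Matrix.of fun i j => fderiv ℝ (fun p => M p i j) q v)
        + (mulVecJacobian M q v - (mulVecJacobian M q v)ᵀ) := by
  ext i j
  have directional : ∑ k, fderiv ℝ (fun p => M p i j) q (Pi.single k 1) * v k
      = fderiv ℝ (fun p => M p i j) q v := by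
    simp only [map_eq_sum_smul_map_single _ v, smul_eq_mul, mul_comm]
  simp only [coriolisMatrix, mulVecJacobian, Matrix.smul_apply, Matrix.add_apply,
    Matrix.sub_apply, Matrix.transpose_apply, Matrix.of_apply, smul_eq_mul, add_mul, sub_mul,
    Finset.sum_add_distrib, Finset.sum_sub_distrib, directional]
  ring

theorem of_deriv_comp_eq_of_fderiv {𝕜 E ι κ : Type*} [NontriviallyNormedField 𝕜]
    [NormedAddCommGroup E] [NormedSpace 𝕜 E] {M : E → Matrix ι κ 𝕜} {q : 𝕜 → E} {v : E} {t : 𝕜}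
    (hM : ∀ i j, DifferentiableAt 𝕜 (fun p => M p i j) (q t)) (hq : HasDerivAt q v t) :
    (Matrix.of fun i j => deriv (fun s => M (q s) i j) t)
      = Matrix.of fun i j => fderiv 𝕜 (fun p => M p i j) (q t) v := by
  ext i j
  exact ((hM i j).hasFDerivAt.comp_hasDerivAt t hq).deriv

theorem stmt_2_general {n : ℕ} {M : (Fin n → ℝ) → Matrix (Fin n) (Fin n) ℝ}
    {q : ℝ → Fin n → ℝ} {v : Fin n → ℝ} {t : ℝ}
    (hM : ∀ i j, DifferentiableAt ℝ (fun p => M p i j) (q t)) (hq : HasDerivAt q v t) :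
    ((Matrix.of fun i j => deriv (fun s => M (q s) i j) t)
        - (2 : ℝ) • coriolisMatrix n M (q t) v)ᵀ
      = -((Matrix.of fun i j => deriv (fun s => M (q s) i j) t)
        - (2 : ℝ) • coriolisMatrix n M (q t) v) := by
  rw [of_deriv_comp_eq_of_fderiv hM hq, two_smul_coriolisMatrix, sub_add_cancel_left, neg_sub,
    transpose_sub, transpose_transpose, neg_sub]

/-- Lemma 1 of the paper: if `M : ℝⁿ → ℝ^{n×n}` is C¹ and symmetric-valued
and `q : ℝ → ℝⁿ` is differentiable with derivative `q̇`, then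
`(d/dt)[M(q(t))] − 2·C(t)` is skew-symmetric, where `C(t) = coriolisMatrix n M (q t) (q̇ t)`. -/
theorem stmt_2 (n : ℕ) (M : (Fin n → ℝ) → Matrix (Fin n) (Fin n) ℝ)
    (hM : ∀ i j, ContDiff ℝ 1 (fun p => M p i j))
    (hMsymm : ∀ p, (M p).IsSymm)
    (q qd : ℝ → Fin n → ℝ) (hq : ∀ t, HasDerivAt q (qd t) t) :
    ∀ t : ℝ,
      ((Matrix.of fun i j => deriv (fun s => M (q s) i j) t)
          - (2 : ℝ) • coriolisMatrix n M (q t) (qd t))ᵀ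
        = -((Matrix.of fun i j => deriv (fun s => M (q s) i j) t)
          - (2 : ℝ) • coriolisMatrix n M (q t) (qd t)) :=
  fun t => stmt_2_general (fun i j => (hM i j).differentiable one_ne_zero (q t)) (hq t)
end

section
/- Let M : ℝ → Matrix (Fin n) (Fin n) ℝ be differentiable with M(t) symmetric for every t, let C : ℝ → Matrix (Fin n) (Fin n) ℝ, let v : ℝ → ℝⁿ be differentiable, and let u, τ_g, τ_ext : ℝ → ℝⁿ. Suppose that for every t: (i) M(t)·v'(t) + C(t)·v(t) + τ_g(t) = u(t) + τ_ext(t), and (ii) M'(t) − 2·C(t) is skew-symmetric. Then for every t, the kinetic energy T(t) := (1/2)⟨v(t), M(t)·v(t)⟩ is differentiable with T'(t) = ⟨v(t), u(t) + τ_ext(t) − τ_g(t)⟩. -/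
open Matrix

section Deriv

variable {𝕜 𝔸 m n : Type*} [NontriviallyNormedField 𝕜] [NormedRing 𝔸] [NormedAlgebra 𝕜 𝔸]
  [Fintype n] {t : 𝕜}

theorem hasDerivAt_dotProduct {v w : 𝕜 → n → 𝔸} {v' w' : n → 𝔸}
    (hv : HasDerivAt v v' t) (hw : HasDerivAt w w' t) :
    HasDerivAt (fun s => v s ⬝ᵥ w s) (v' ⬝ᵥ w t + v t ⬝ᵥ w') t := by
  simp only [dotProduct, ← Finset.sum_add_distrib]
  exact HasDerivAt.fun_sum fun i _ => (hasDerivAt_pi.1 hv i).fun_mul (hasDerivAt_pi.1 hw i)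

theorem hasDerivAt_mulVec [Finite m] {A : 𝕜 → Matrix m n 𝔸} {A' : Matrix m n 𝔸}
    {v : 𝕜 → n → 𝔸} {v' : n → 𝔸}
    (hA : ∀ i j, HasDerivAt (fun s => A s i j) (A' i j) t) (hv : HasDerivAt v v' t) :
    HasDerivAt (fun s => A s *ᵥ v s) (A' *ᵥ v t + A t *ᵥ v') t := by
  cases nonempty_fintype m
  exact hasDerivAt_pi.2 fun i => hasDerivAt_dotProduct (hasDerivAt_pi.2 (hA i)) hv

end Deriv

section BilinearForm

variable {R n : Type*} [Fintype n] {A : Matrix n n R}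

theorem dotProduct_mulVec_comm_of_isSymm [NonUnitalCommSemiring R] (hA : A.IsSymm) (x y : n → R) :
    x ⬝ᵥ A *ᵥ y = y ⬝ᵥ A *ᵥ x := by
  rw [← dotProduct_transpose_mulVec, hA.eq]

theorem dotProduct_mulVec_self_eq_zero_of_transpose_eq_neg [NonUnitalCommRing R]
    [IsAddTorsionFree R] (hA : Aᵀ = -A) (x : n → R) : x ⬝ᵥ A *ᵥ x = 0 := by
  rw [← self_eq_neg, ← dotProduct_neg, ← neg_mulVec, ← hA, dotProduct_transpose_mulVec]

end BilinearForm

theorem hasDerivAt_half_dotProduct_mulVec_self {𝕜 n : Type*} [NontriviallyNormedField 𝕜]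
    [NeZero (2 : 𝕜)] [Fintype n] {t : 𝕜} {A : 𝕜 → Matrix n n 𝕜} {A' : Matrix n n 𝕜}
    {v : 𝕜 → n → 𝕜} {v' : n → 𝕜}
    (hA : ∀ i j, HasDerivAt (fun s => A s i j) (A' i j) t) (hAsymm : (A t).IsSymm)
    (hv : HasDerivAt v v' t) :
    HasDerivAt (fun s => (1 / 2) * (v s ⬝ᵥ A s *ᵥ v s))
      (v t ⬝ᵥ A t *ᵥ v' + (1 / 2) * (v t ⬝ᵥ A' *ᵥ v t)) t := by
  refine ((hasDerivAt_dotProduct hv (hasDerivAt_mulVec hA hv)).const_mul (1 / 2)).congr_deriv ?_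
  rw [dotProduct_add, dotProduct_mulVec_comm_of_isSymm hAsymm v' (v t)]
  field

/-- The matrix `C` enters only through the power `⟨v, C v⟩`, which `hpower` identifies with
`½⟨v, M' v⟩`, the contribution of the varying inertia to the rate of change of the energy. -/
theorem stmt_3_general {𝕜 ι : Type*} [NontriviallyNormedField 𝕜] [NeZero (2 : 𝕜)] [Fintype ι]
    {t : 𝕜} {M : 𝕜 → Matrix ι ι 𝕜} {M' C : Matrix ι ι 𝕜} {v : 𝕜 → ι → 𝕜}
    {v' u τg τext : ι → 𝕜}
    (hM : ∀ i j, HasDerivAt (fun s => M s i j) (M' i j) t) (hMsymm : (M t).IsSymm)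
    (hv : HasDerivAt v v' t)
    (hdyn : M t *ᵥ v' + C *ᵥ v t + τg = u + τext)
    (hpower : v t ⬝ᵥ (M' - (2 : 𝕜) • C) *ᵥ v t = 0) :
    HasDerivAt (fun s => (1 / 2) * (v s ⬝ᵥ M s *ᵥ v s)) (v t ⬝ᵥ (u + τext - τg)) t := by
  have coriolis_power : v t ⬝ᵥ M' *ᵥ v t = 2 * (v t ⬝ᵥ C *ᵥ v t) := by
    rwa [sub_mulVec, smul_mulVec, dotProduct_sub, dotProduct_smul, smul_eq_mul,
      sub_eq_zero] at hpower
  have net_force : u + τext - τg = M t *ᵥ v' + C *ᵥ v t := by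
    rw [← hdyn, add_sub_cancel_right]
  refine (hasDerivAt_half_dotProduct_mulVec_self hM hMsymm hv).congr_deriv ?_
  rw [net_force, dotProduct_add, coriolis_power, one_div, inv_mul_cancel_left₀ two_ne_zero]

/-- along a trajectory of the rigid-body dynamics
`M v̇ + C v + τ_g = u + τ_ext`, with `Ṁ − 2C` skew-symmetric and `M` symmetric,
the kinetic energy `T = (1/2)⟨v, M v⟩` satisfies `Ṫ = ⟨v, u + τ_ext − τ_g⟩`. -/
theorem stmt_3 (n : ℕ)
    (M M' : ℝ → Matrix (Fin n) (Fin n) ℝ)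
    (hM : ∀ t i j, HasDerivAt (fun s => M s i j) (M' t i j) t)
    (hMsymm : ∀ t, (M t).IsSymm)
    (C : ℝ → Matrix (Fin n) (Fin n) ℝ)
    (v v' : ℝ → Fin n → ℝ) (hv : ∀ t, HasDerivAt v (v' t) t)
    (u τg τext : ℝ → Fin n → ℝ)
    (hdyn : ∀ t, (M t).mulVec (v' t) + (C t).mulVec (v t) + τg t = u t + τext t)
    (hskew : ∀ t, (M' t - (2 : ℝ) • C t)ᵀ = -(M' t - (2 : ℝ) • C t)) :
    ∀ t : ℝ,
      HasDerivAt (fun s => (1 / 2) * (v s ⬝ᵥ (M s).mulVec (v s)))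
        (v t ⬝ᵥ (u t + τext t - τg t)) t :=
  fun t => stmt_3_general (hM t) (hMsymm t) (hv t) (hdyn t)
    (dotProduct_mulVec_self_eq_zero_of_transpose_eq_neg (hskew t) (v t))
end

section
/- Let K be an n×n real matrix and μ < 0 be such that (1/2)(K + Kᵀ) − μ·I is negative semidefinite (i.e., the symmetric part of K has all eigenvalues at most μ). Let δ ≥ 0, let p, x₂ : ℝ → ℝⁿ be differentiable, let v, d : ℝ → ℝⁿ with ‖d(t)‖ ≤ δ for all t ≥ 0, and suppose p'(t) = v(t) and x₂'(t) = v(t) + K·(x₂(t) − p(t)) + d(t) for all t. Then the error e(t) := x₂(t) − p(t) satisfies e'(t) = K·e(t) + d(t), and ‖e(t)‖ ≤ max( ‖e(0)‖, δ / (−μ) ) for all t ≥ 0. -/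
open Matrix

/-!
Along a trajectory of `e' = K e + d`, half the derivative of `‖e‖ ^ 2` is
`⟪e, K e + d⟫ ≤ ‖e‖ * (μ * ‖e‖ + δ)`, which is nonpositive as soon as `δ / (-μ) ≤ ‖e‖`. Hence
every ball of radius at least `δ / (-μ)` centred at the origin is forward invariant; take the
smallest one containing `e 0`.
-/

section ForwardInvariance

open Set

variable {E : Type*} [NormedAddCommGroup E] [InnerProductSpace ℝ E]

lemma le_of_deriv_right_nonpos_of_lt {f f' : ℝ → ℝ} {a b c : ℝ}
    (hf : ContinuousOn f (Icc a b))
    (hf' : ∀ t ∈ Ico a b, HasDerivWithinAt f (f' t) (Ici t) t)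
    (ha : f a ≤ c) (hbound : ∀ t ∈ Ico a b, c < f t → f' t ≤ 0)
    {t : ℝ} (ht : t ∈ Icc a b) : f t ≤ c := by
  -- The tilted barrier `c + ε * (1 + (s - a))` lies above `c` and rises strictly, so `f` cannot
  -- cross it.
  have le_barrier (ε : ℝ) (hε : 0 < ε) : f t ≤ c + ε * (1 + (t - a)) := by
    refine image_le_of_deriv_right_lt_deriv_boundary (B := fun s ↦ c + ε * (1 + (s - a)))
      (B' := fun _ ↦ ε) hf hf' ?_ (fun s ↦ ?_) (fun s hs hfs ↦ ?_) ht
    · linarith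
    · simpa using ((((hasDerivAt_id s).sub_const a).const_add 1).const_mul ε).const_add c
    · have c_lt : c < f s := by
        rw [hfs, lt_add_iff_pos_right]
        exact mul_pos hε (by linarith [hs.1])
      exact (hbound s hs c_lt).trans_lt hε
  have length_pos : 0 < 1 + (t - a) := by linarith [ht.1]
  refine le_of_forall_pos_le_add fun ε hε ↦ ?_
  simpa [div_mul_cancel₀ ε length_pos.ne'] using
    le_barrier (ε / (1 + (t - a))) (div_pos hε length_pos)

lemma norm_le_of_inner_deriv_right_nonpos {e e' : ℝ → E} {a b R : ℝ}
    (he : ContinuousOn e (Icc a b))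
    (he' : ∀ t ∈ Ico a b, HasDerivWithinAt e (e' t) (Ici t) t)
    (ha : ‖e a‖ ≤ R) (hinner : ∀ t ∈ Ico a b, R < ‖e t‖ → inner ℝ (e t) (e' t) ≤ 0)
    {t : ℝ} (ht : t ∈ Icc a b) : ‖e t‖ ≤ R := by
  have R_nonneg : 0 ≤ R := (norm_nonneg _).trans ha
  have norm_sq_le : ‖e t‖ ^ 2 ≤ R ^ 2 := by
    refine le_of_deriv_right_nonpos_of_lt (f := fun s ↦ ‖e s‖ ^ 2) (he.norm.pow 2)
      (fun s hs ↦ (he' s hs).norm_sq) (by gcongr) (fun s hs hR ↦ ?_) ht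
    have := hinner s hs (lt_of_pow_lt_pow_left₀ 2 (norm_nonneg _) hR)
    linarith
  exact (sq_le_sq₀ (norm_nonneg _) R_nonneg).1 norm_sq_le

lemma inner_add_nonpos_of_div_neg_le_norm {x y d : E} {μ δ : ℝ} (hμ : μ < 0)
    (hy : inner ℝ x y ≤ μ * ‖x‖ ^ 2) (hd : ‖d‖ ≤ δ) (hx : δ / (-μ) ≤ ‖x‖) :
    inner ℝ x (y + d) ≤ 0 := by
  have δ_le : δ ≤ ‖x‖ * (-μ) := (div_le_iff₀ (neg_pos.2 hμ)).1 hx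
  calc inner ℝ x (y + d) = inner ℝ x y + inner ℝ x d := inner_add_right x y d
    _ ≤ μ * ‖x‖ ^ 2 + ‖x‖ * ‖d‖ := add_le_add hy (real_inner_le_norm x d)
    _ ≤ μ * ‖x‖ ^ 2 + ‖x‖ * (‖x‖ * (-μ)) := by gcongr; exact hd.trans δ_le
    _ = 0 := by ring

lemma norm_le_max_of_perturbed_dissipative {K : E → E} {μ δ : ℝ} (hμ : μ < 0)
    (hK : ∀ x, inner ℝ x (K x) ≤ μ * ‖x‖ ^ 2) {e d : ℝ → E} {a b : ℝ}
    (he : ContinuousOn e (Icc a b))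
    (he' : ∀ t ∈ Ico a b, HasDerivWithinAt e (K (e t) + d t) (Ici t) t)
    (hd : ∀ t ∈ Ico a b, ‖d t‖ ≤ δ) {t : ℝ} (ht : t ∈ Icc a b) :
    ‖e t‖ ≤ max ‖e a‖ (δ / (-μ)) :=
  norm_le_of_inner_deriv_right_nonpos he he' (le_max_left _ _)
    (fun s hs hR ↦ inner_add_nonpos_of_div_neg_le_norm hμ (hK (e s)) (hd s hs)
      ((le_max_right _ _).trans hR.le)) ht

end ForwardInvariance

section SymmetricPart

variable {ι : Type*} [Fintype ι]

lemma dotProduct_half_smul_add_transpose_mulVec (K : Matrix ι ι ℝ) (x : ι → ℝ) :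
    x ⬝ᵥ ((1 / 2 : ℝ) • (K + Kᵀ)) *ᵥ x = x ⬝ᵥ K *ᵥ x := by
  have transpose_form : x ⬝ᵥ Kᵀ *ᵥ x = x ⬝ᵥ K *ᵥ x := by
    rw [mulVec_transpose, dotProduct_comm, dotProduct_mulVec]
  rw [smul_mulVec, add_mulVec, dotProduct_smul, dotProduct_add, transpose_form, smul_eq_mul]
  ring

lemma inner_toLp_mulVec_le_of_posSemidef [DecidableEq ι] {K : Matrix ι ι ℝ} {μ : ℝ}
    (hK : (μ • (1 : Matrix ι ι ℝ) - (1 / 2 : ℝ) • (K + Kᵀ)).PosSemidef)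
    (x : EuclideanSpace ℝ ι) :
    inner ℝ x (WithLp.toLp 2 (K *ᵥ x)) ≤ μ * ‖x‖ ^ 2 := by
  have form_nonneg : 0 ≤ μ * (x ⬝ᵥ x) - x ⬝ᵥ K *ᵥ x := by
    simpa only [star_trivial, sub_mulVec, dotProduct_sub, dotProduct_half_smul_add_transpose_mulVec,
      smul_mulVec μ, one_mulVec, dotProduct_smul, smul_eq_mul]
      using hK.dotProduct_mulVec_nonneg x
  rw [← real_inner_self_eq_norm_sq]
  simp only [EuclideanSpace.inner_eq_star_dotProduct, star_trivial]
  rw [dotProduct_comm]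
  exact sub_nonneg.1 form_nonneg

end SymmetricPart

theorem stmt_10_general {E : Type*} [NormedAddCommGroup E] [InnerProductSpace ℝ E]
    {K : E → E} {μ : ℝ} (hμ : μ < 0)
    (hK : ∀ x, inner ℝ x (K x) ≤ μ * ‖x‖ ^ 2) {δ : ℝ} {p x₂ v d : ℝ → E}
    (hd : ∀ t ≥ (0 : ℝ), ‖d t‖ ≤ δ) (hp' : ∀ t, HasDerivAt p (v t) t)
    (hx₂' : ∀ t, HasDerivAt x₂ (v t + K (x₂ t - p t) + d t) t) :
    (∀ t : ℝ, HasDerivAt (fun s ↦ x₂ s - p s) (K (x₂ t - p t) + d t) t)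
    ∧ ∀ t ≥ (0 : ℝ), ‖x₂ t - p t‖ ≤ max ‖x₂ 0 - p 0‖ (δ / (-μ)) := by
  have error_deriv (t : ℝ) : HasDerivAt (fun s ↦ x₂ s - p s) (K (x₂ t - p t) + d t) t := by
    simpa only [add_assoc, add_sub_cancel_left] using (hx₂' t).fun_sub (hp' t)
  refine ⟨error_deriv, fun t ht ↦ ?_⟩
  exact norm_le_max_of_perturbed_dissipative hμ hK
    (fun s _ ↦ (error_deriv s).continuousAt.continuousWithinAt)
    (fun s _ ↦ (error_deriv s).hasDerivWithinAt) (fun s hs ↦ hd s hs.1) (Set.right_mem_Icc.2 ht)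

/-- linear LIP–CoM interface: if the symmetric part of `K` has all
eigenvalues at most `μ < 0` (i.e. `(1/2)(K + Kᵀ) − μI` is negative semidefinite),
`‖d(t)‖ ≤ δ`, `p' = v`, and `x₂' = v + K(x₂ − p) + d`, then the error `e = x₂ − p`
satisfies `e' = K e + d` and `‖e(t)‖ ≤ max(‖e(0)‖, δ/(−μ))` for all `t ≥ 0`. -/
theorem stmt_10 (n : ℕ) (K : Matrix (Fin n) (Fin n) ℝ) (μ : ℝ) (hμ : μ < 0)
    (hK : (μ • (1 : Matrix (Fin n) (Fin n) ℝ)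
      - (1 / 2 : ℝ) • (K + Kᵀ)).PosSemidef)
    (δ : ℝ) (hδ : 0 ≤ δ)
    (p x₂ : ℝ → EuclideanSpace ℝ (Fin n))
    (hp : Differentiable ℝ p) (hx₂ : Differentiable ℝ x₂)
    (v d : ℝ → EuclideanSpace ℝ (Fin n))
    (hd : ∀ t ≥ (0 : ℝ), ‖d t‖ ≤ δ)
    (hp' : ∀ t, HasDerivAt p (v t) t)
    (hx₂' : ∀ t, HasDerivAt x₂ (v t + (EuclideanSpace.equiv (Fin n) ℝ).symm (K.mulVec (x₂ t - p t)) + d t) t) :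
    (∀ t : ℝ, HasDerivAt (fun s => x₂ s - p s) ((EuclideanSpace.equiv (Fin n) ℝ).symm (K.mulVec (x₂ t - p t)) + d t) t)
    ∧ ∀ t ≥ (0 : ℝ), ‖x₂ t - p t‖ ≤ max ‖x₂ 0 - p 0‖ (δ / (-μ)) :=
  stmt_10_general hμ (inner_toLp_mulVec_le_of_posSemidef hK) hd hp' hx₂'
end
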